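/- Let q₀ ∈ ℍ ∖ ℝ and p ≥ 1. Then for all 0 ≤ k ≤ p, ((∂_c∂_s)^k Δ_{q₀}^p)(q₀) equals k! if k = p and equals 0 otherwise. -/

import Mathlib

noncomputable section

open Quaternion

abbrev ℍq := Quaternion ℝ

/-- Spherical value of a function of a quaternionic variable. -/
def svalue (f : ℍq → ℍq) (x : ℍq) : ℍq := (f x + f (star x)) / 2

/-- Spherical derivative of a function of a quaternionic variable. -/
def sderiv' (f : ℍq → ℍq) (x : ℍq) : ℍq := (2 * x.im)⁻¹ * (f x - f (star x))

/-- The imaginary unit `Im(x)/|Im(x)|` attached to a (non-real) quaternion. -/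
def qJ (x : ℍq) : ℍq := (‖x.im‖)⁻¹ • x.im

/-- Slice (Cullen) derivative `∂_c f = (1/2)(∂/∂α − I ∂/∂β) f` at `x = α + Iβ`. -/
def cderiv (f : ℍq → ℍq) (x : ℍq) : ℍq :=
  (1/2 : ℝ) • (fderiv ℝ f x 1 - qJ x * fderiv ℝ f x (qJ x))

/-- The conjugate operator `∂̄_c f = (1/2)(∂/∂α + I ∂/∂β) f`. -/
def cderivBar (f : ℍq → ℍq) (x : ℍq) : ℍq :=
  (1/2 : ℝ) • (fderiv ℝ f x 1 + qJ x * fderiv ℝ f x (qJ x))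

/-- A circular (axially symmetric) subset of the quaternions. -/
def IsCircular (Ω : Set ℍq) : Prop :=
  ∀ x ∈ Ω, ∀ y : ℍq, y.re = x.re → ‖y.im‖ = ‖x.im‖ → y ∈ Ω

/-- A slice function on `Ω`: it is determined by the representation formula
`f(α + Iβ) = F₀(α,β) + I F₁(α,β)` with `F₀ = v_s f`, `F₁ = β ∂_s f`. -/
def IsSlice (Ω : Set ℍq) (f : ℍq → ℍq) : Prop :=
  ∀ x ∈ Ω, ∀ y ∈ Ω, x.re = y.re → ‖x.im‖ = ‖y.im‖ →
    f x = svalue f y + x.im * sderiv' f y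

/-- A slice regular function on a circular domain: a real-differentiable slice
function whose stem function is holomorphic, i.e. `∂̄_c f = 0` off the reals. -/
def IsSliceRegular (Ω : Set ℍq) (f : ℍq → ℍq) : Prop :=
  IsSlice Ω f ∧ DifferentiableOn ℝ f Ω ∧ ∀ x ∈ Ω, x.im ≠ 0 → cderivBar f x = 0

/-- Pointwise formula for the slice product `f·g = 𝓘(FG)` of two slice functions. -/
def sprod (f g : ℍq → ℍq) (x : ℍq) : ℍq :=
  svalue f x * svalue g x + x.im * x.im * (sderiv' f x * sderiv' g x)
    + x.im * (svalue f x * sderiv' g x + sderiv' f x * svalue g x)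

/-- Characteristic polynomial of `q₀`: `Δ_{q₀}(x) = x² − 2 Re(q₀) x + |q₀|²`. -/
def Delta (q₀ : ℍq) (x : ℍq) : ℍq := x ^ 2 - 2 * (q₀.re : ℍq) * x + ((‖q₀‖ ^ 2 : ℝ) : ℍq)

/-- The operator `∂_c ∂_s`. -/
def opCS (f : ℍq → ℍq) : ℍq → ℍq := cderiv (sderiv' f)

/-- The operator `∂_s ∂_c`. -/
def opSC (f : ℍq → ℍq) : ℍq → ℍq := sderiv' (cderiv f)

open MvPolynomial in
def evp (q₀ : ℍq) (F : MvPolynomial (Fin 2) ℝ) (x : ℍq) : ℝ :=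
  MvPolynomial.eval ![x.re - q₀.re,
    (q₀.imI^2+q₀.imJ^2+q₀.imK^2) - (x.imI^2+x.imJ^2+x.imK^2)] F

def SRep (q₀ : ℍq) (f : ℍq → ℍq) (F₀ F₁ : MvPolynomial (Fin 2) ℝ) : Prop :=
  ∀ x : ℍq, x.im ≠ 0 → f x = ((evp q₀ F₀ x : ℝ) : ℍq) + ((evp q₀ F₁ x : ℝ) : ℍq) * x.im

def cRe : ℍq →L[ℝ] ℝ := LinearMap.toContinuousLinearMap
  { toFun := fun x => x.re, map_add' := by intros; simp, map_smul' := by intros; simp }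
def cI : ℍq →L[ℝ] ℝ := LinearMap.toContinuousLinearMap
  { toFun := fun x => x.imI, map_add' := by intros; simp, map_smul' := by intros; simp }
def cJ : ℍq →L[ℝ] ℝ := LinearMap.toContinuousLinearMap
  { toFun := fun x => x.imJ, map_add' := by intros; simp, map_smul' := by intros; simp }
def cK : ℍq →L[ℝ] ℝ := LinearMap.toContinuousLinearMap
  { toFun := fun x => x.imK, map_add' := by intros; simp, map_smul' := by intros; simp }
def cCoe : ℝ →L[ℝ] ℍq := LinearMap.toContinuousLinearMap
  { toFun := fun x => (x : ℍq), map_add' := by intros; simp,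
    map_smul' := by intros; ext <;> simp }

lemma cRe_apply (x : ℍq) : cRe x = x.re := rfl
lemma cI_apply (x : ℍq) : cI x = x.imI := rfl
lemma cJ_apply (x : ℍq) : cJ x = x.imJ := rfl
lemma cK_apply (x : ℍq) : cK x = x.imK := rfl

def dT (x : ℍq) : ℍq →L[ℝ] ℝ :=
  -((2 * x.imI) • cI + (2 * x.imJ) • cJ + (2 * x.imK) • cK)

lemma hasT (c : ℝ) (x : ℍq) :
    HasFDerivAt (fun x : ℍq => c - (x.imI^2+x.imJ^2+x.imK^2)) (dT x) x := by
  have h1 : HasFDerivAt (fun x : ℍq => x.imI) cI x := cI.hasFDerivAt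
  have h2 : HasFDerivAt (fun x : ℍq => x.imJ) cJ x := cJ.hasFDerivAt
  have h3 : HasFDerivAt (fun x : ℍq => x.imK) cK x := cK.hasFDerivAt
  have := (((h1.pow 2).add (h2.pow 2)).add (h3.pow 2)).const_sub c
  refine this.congr_fderiv (ContinuousLinearMap.ext fun v => ?_)
  simp [dT]

lemma hasEvp (q₀ : ℍq) (F : MvPolynomial (Fin 2) ℝ) (x : ℍq) :
    HasFDerivAt (evp q₀ F) (evp q₀ (MvPolynomial.pderiv 0 F) x • cRe
      + evp q₀ (MvPolynomial.pderiv 1 F) x • dT x) x := by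
  induction F using MvPolynomial.induction_on with
  | C a =>
    have : evp q₀ (MvPolynomial.C a) = fun _ => a := by funext y; simp [evp]
    rw [this]
    refine (hasFDerivAt_const a x).congr_fderiv ?_
    simp [evp]
  | add p q hp hq =>
    have : evp q₀ (p + q) = fun y => evp q₀ p y + evp q₀ q y := by funext y; simp [evp]
    rw [this]
    refine (hp.add hq).congr_fderiv (ContinuousLinearMap.ext fun v => ?_)
    simp [evp]; ring
  | mul_X p i hp =>
    have h0 : HasFDerivAt (fun y : ℍq => y.re - q₀.re) cRe x :=
      (cRe.hasFDerivAt (x := x)).sub_const q₀.re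
    have h1 := hasT (q₀.imI^2+q₀.imJ^2+q₀.imK^2) x
    fin_cases i
    · have : evp q₀ (p * MvPolynomial.X 0) = fun y => evp q₀ p y * (y.re - q₀.re) := by
        funext y; simp [evp]
      simp only [Fin.zero_eta]
      rw [this]
      refine (hp.mul h0).congr_fderiv (ContinuousLinearMap.ext fun v => ?_)
      simp [evp, MvPolynomial.pderiv_X]; ring
    · have : evp q₀ (p * MvPolynomial.X 1) = fun y => evp q₀ p y *
          ((q₀.imI^2+q₀.imJ^2+q₀.imK^2) - (y.imI^2+y.imJ^2+y.imK^2)) := by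
        funext y; simp [evp]
      simp only [Fin.mk_one]
      rw [this]
      refine (hp.mul h1).congr_fderiv (ContinuousLinearMap.ext fun v => ?_)
      simp [evp, MvPolynomial.pderiv_X]; ring

lemma evp_star (q₀ : ℍq) (F : MvPolynomial (Fin 2) ℝ) (x : ℍq) :
    evp q₀ F (star x) = evp q₀ F x := by simp [evp]

lemma rep_sderiv {q₀ : ℍq} {f : ℍq → ℍq} {F₀ F₁} (h : SRep q₀ f F₀ F₁) (x : ℍq) (hx : x.im ≠ 0) :
    sderiv' f x = ((evp q₀ F₁ x : ℝ) : ℍq) := by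
  have him : (star x).im = - x.im := by ext <;> simp
  have hx' : (star x).im ≠ 0 := by rw [him]; simpa using hx
  unfold sderiv'
  rw [h x hx, h _ hx', evp_star, evp_star, him]
  have : ((evp q₀ F₀ x : ℝ) : ℍq) + ((evp q₀ F₁ x : ℝ) : ℍq) * x.im
      - (((evp q₀ F₀ x : ℝ) : ℍq) + ((evp q₀ F₁ x : ℝ) : ℍq) * -x.im)
      = (2 * x.im) * ((evp q₀ F₁ x : ℝ) : ℍq) := by
    rw [mul_assoc, ← (Quaternion.coe_commutes (evp q₀ F₁ x) x.im)]
    noncomm_ring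
  rw [this, ← mul_assoc, inv_mul_cancel₀, one_mul]
  refine mul_ne_zero (fun h2 => ?_) hx
  have h3 : (2 : ℍq) = ((2 : ℝ) : ℍq) := by norm_cast
  have h4 := congrArg (fun y : ℍq => y.re) (h3.symm.trans h2)
  simp at h4

lemma rep_opCS {q₀ : ℍq} {f : ℍq → ℍq} {F₀ F₁} (h : SRep q₀ f F₀ F₁) :
    SRep q₀ (opCS f) (MvPolynomial.C (1/2) * MvPolynomial.pderiv 0 F₁)
      (MvPolynomial.pderiv 1 F₁) := by
  intro x hx
  have hc : Continuous (fun y : ℍq => y.im) := Quaternion.continuous_im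
  have hev : sderiv' f =ᶠ[nhds x] fun y => ((evp q₀ F₁ y : ℝ) : ℍq) := by
    filter_upwards [hc.continuousAt.eventually_ne hx] with y hy
    exact rep_sderiv h y hy
  have hd := ((cCoe.hasFDerivAt (x := evp q₀ F₁ x)).comp x (hasEvp q₀ F₁ x))
  have hd' := hd.congr_of_eventuallyEq (f₁ := sderiv' f) hev
  unfold opCS cderiv
  rw [hd'.fderiv]
  have hn : ‖x.im‖ ≠ 0 := norm_ne_zero_iff.mpr hx
  have hn2 : ‖x.im‖ ^ 2 = x.imI^2 + x.imJ^2 + x.imK^2 := by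
    rw [sq, ← Quaternion.normSq_eq_norm_mul_self, Quaternion.normSq_def']; simp
  have e1 : dT x 1 = 0 := by simp [dT, cI_apply, cJ_apply, cK_apply]
  have e2 : dT x (qJ x) = -2 * ‖x.im‖ := by
    have : dT x (qJ x) = -2 * (‖x.im‖⁻¹ * (x.imI^2 + x.imJ^2 + x.imK^2)) := by
      simp [dT, cI_apply, cJ_apply, cK_apply, qJ]; ring
    rw [this, ← hn2]; field_simp
  have e3 : cRe 1 = 1 := by simp [cRe_apply]
  have e4 : cRe (qJ x) = 0 := by simp [cRe_apply, qJ]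
  have e5 : ∀ r : ℝ, cCoe r = (r : ℍq) := fun r => rfl
  have e6 : evp q₀ (MvPolynomial.C (1/2) * MvPolynomial.pderiv 0 F₁) x
    = 1/2 * evp q₀ (MvPolynomial.pderiv 0 F₁) x := by simp [evp]
  simp only [ContinuousLinearMap.comp_apply, add_apply,
    smul_apply, e1, e2, e3, e4, e5, e6]
  unfold qJ
  obtain ⟨r, hr⟩ : ∃ r, evp q₀ (MvPolynomial.pderiv 0 F₁) x = 2 * r :=
    ⟨evp q₀ (MvPolynomial.pderiv 0 F₁) x / 2, by ring⟩
  rw [hr, show 1 / 2 * (2 * r) = r by ring]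
  generalize evp q₀ (MvPolynomial.pderiv 1 F₁) x = c
  simp only [smul_eq_mul, mul_one, mul_zero, add_zero, zero_add]
  generalize hu : c * (-2 * ‖x.im‖) = u
  generalize hv : 2 * r = v
  ext <;> simp [← hu, ← hv] <;> field_simp

open MvPolynomial in
lemma rep_Delta (q₀ : ℍq) (x : ℍq) : Delta q₀ x =
    ((evp q₀ (X 0 ^ 2 + X 1) x : ℝ) : ℍq) + ((evp q₀ (C 2 * X 0) x : ℝ) : ℍq) * x.im := by
  have hn : ‖q₀‖ ^ 2 = q₀.re^2 + q₀.imI^2 + q₀.imJ^2 + q₀.imK^2 := by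
    rw [sq, ← Quaternion.normSq_eq_norm_mul_self, Quaternion.normSq_def']
  have h2 : (2 : ℍq) = ((2 : ℝ) : ℍq) := by norm_cast
  unfold Delta
  rw [hn, h2]
  generalize hm : q₀.re^2 + q₀.imI^2 + q₀.imJ^2 + q₀.imK^2 = m
  generalize hu : evp q₀ (X 0 ^ 2 + X 1) x = u
  generalize hv : evp q₀ (C 2 * X 0) x = v
  simp [evp] at hu hv
  ext <;> simp [sq, ← hm, ← hu, ← hv] <;> ring

open MvPolynomial in
lemma rep_pow (q₀ : ℍq) (p : ℕ) : ∃ G₀ G₁ : MvPolynomial (Fin 2) ℝ,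
    SRep q₀ (fun x => Delta q₀ x ^ (p+1)) (X 1 ^ (p+1) + X 0 ^ 2 * G₀)
      (C (2 * ((p+1 : ℕ) : ℝ)) * X 1 ^ p * X 0 + X 0 ^ 2 * G₁) := by
  induction p with
  | zero =>
    refine ⟨1, 0, fun x _ => ?_⟩
    simp only [zero_add, pow_one]
    rw [rep_Delta]
    congr 3
    · simp [evp]; ring
    · simp [evp]
  | succ p ih =>
    obtain ⟨G₀, G₁, h⟩ := ih
    set s : ℝ := q₀.imI^2+q₀.imJ^2+q₀.imK^2 with hs
    refine ⟨X 1 ^ (p+1) + (X 0 ^ 2 + X 1) * G₀ + (X 1 - C s) * (C 2 * (C (2 * ((p+1 : ℕ) : ℝ)) * X 1 ^ p + X 0 * G₁)),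
      C 2 * X 0 * G₀ + C (2 * ((p+1 : ℕ) : ℝ)) * X 1 ^ p * X 0 + (X 0 ^ 2 + X 1) * G₁, fun x hx => ?_⟩
    have := h x hx
    simp only at this ⊢
    rw [pow_succ, this, rep_Delta]
    have key : ∀ a b c d : ℝ, ((a : ℍq) + (b : ℍq) * x.im) * ((c : ℍq) + (d : ℍq) * x.im)
      = ((a * c + b * d * (-(x.imI^2+x.imJ^2+x.imK^2)) : ℝ) : ℍq) + ((a * d + b * c : ℝ) : ℍq) * x.im := by
      intro a b c d
      generalize hm : a * c + b * d * (-(x.imI^2+x.imJ^2+x.imK^2)) = m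
      generalize hn : a * d + b * c = n
      ext <;> simp [← hm, ← hn, sq] <;> ring
    rw [key]
    congr 3
    · simp [evp, ← hs]; ring
    · simp [evp]; ring

open MvPolynomial in
lemma rep_iter (q₀ : ℍq) (p k : ℕ) : ∃ F₀ G₁ : MvPolynomial (Fin 2) ℝ,
    SRep q₀ (opCS^[k] (fun x => Delta q₀ x ^ (p+1))) F₀
      (C (2 * (((p+1).descFactorial (k+1) : ℕ) : ℝ)) * X 1 ^ (p-k) * X 0 + X 0 ^ 2 * G₁) := by
  induction k with
  | zero =>
    obtain ⟨G₀, G₁, h⟩ := rep_pow q₀ p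
    exact ⟨_, G₁, by simpa using h⟩
  | succ k ih =>
    obtain ⟨F₀, G₁, h⟩ := ih
    have h' := rep_opCS h
    rw [← Function.iterate_succ_apply' opCS k] at h'
    refine ⟨_, pderiv 1 G₁, Eq.mp (congrArg _ ?_) h'⟩
    rw [Nat.descFactorial_succ (p+1) (k+1), Nat.add_sub_add_right, ← Nat.sub_sub p k 1]
    simp [pderiv_X, Derivation.leibniz_pow]
    ring

/-- `((∂_c∂_s)^k Δ_{q₀}^p)(q₀) = k!` if `k = p`, `0` otherwise. -/
theorem opCS_iterate_Delta_pow (q₀ : ℍq) (hq₀ : q₀.im ≠ 0)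
    (p k : ℕ) (hp : 1 ≤ p) (hk : k ≤ p) :
    opCS^[k] (fun x => Delta q₀ x ^ p) q₀
      = if k = p then (k.factorial : ℍq) else 0 := by
  obtain ⟨p, rfl⟩ : ∃ m, p = m + 1 := ⟨p - 1, by omega⟩
  cases k with
  | zero =>
    have h := rep_Delta q₀ q₀
    have h0 : Delta q₀ q₀ = 0 := by rw [h]; simp [evp]
    simp [h0]
  | succ k =>
    obtain ⟨F₀, G₁, h⟩ := rep_iter q₀ p k
    by_cases hkp : k = p
    · subst hkp
      rw [Nat.descFactorial_self] at h
      rw [Function.iterate_succ_apply', rep_opCS h q₀ hq₀]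
      simp [evp, MvPolynomial.pderiv_X, Derivation.leibniz_pow]
      norm_cast
    · have : p - k ≠ 0 := by omega
      rw [Function.iterate_succ_apply', rep_opCS h q₀ hq₀]
      simp [evp, MvPolynomial.pderiv_X, Derivation.leibniz_pow, hkp, this]
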